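/- arXiv:2204.05974 — 2 statements merged into one kernel-verified Lean document; each statement's English description precedes it below -/
import Mathlib

section
/- Let X be a totally disconnected Tychonoff space. Then the following are equivalent: (a) C_p(X, ℕ) is non-meager; (b) C_p(X, ℕ) is a Baire space; (c) X has the B_ℕ-property. -/
open Set Topology

/-- `Cp X Y` : continuous functions from `X` to `Y` with the topology of pointwise
convergence, i.e. the subspace topology inherited from the product space `Y^X`. -/
abbrev Cp (X Y : Type*) [TopologicalSpace X] [TopologicalSpace Y] : Type _ :=
  {f : X → Y // Continuous f}

/-- The `B_ℕ`-property: for every pairwise disjoint family `{Δ n}` of nonempty finite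
subsets of `X` there are a strictly increasing sequence `nk` and a discrete family
`{W k}` of clopen subsets of `X` with `Δ (nk k) ⊆ W k` for every `k`. -/
def BNProperty (X : Type*) [TopologicalSpace X] : Prop :=
  ∀ Δ : ℕ → Set X,
    (∀ n, (Δ n).Finite) →
    (∀ n, (Δ n).Nonempty) →
    (∀ m n, m ≠ n → Δ m ∩ Δ n = ∅) →
    ∃ nk : ℕ → ℕ, StrictMono nk ∧
      ∃ W : ℕ → Set X,
        (∀ k, IsClopen (W k)) ∧
        (∀ k, Δ (nk k) ⊆ W k) ∧
        -- the family `{W k}` is discrete: every point has a neighborhood meeting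
        -- at most one member of the family
        (∀ x : X, ∃ U ∈ 𝓝 x, {k : ℕ | (W k ∩ U).Nonempty}.Subsingleton)

/-!
The points of a finite set `S` in a totally separated space are told apart by finitely many clopen
sets, so `S` is a locally constant retract of the space. Every function on `S` therefore extends
continuously, and the cylinders of finite partial functions form a base of nonempty sets of
`Cp X Y` when `Y` is discrete.

If `Δ` is a pairwise disjoint sequence of finite sets and `y` is injective, a generic `f : Cp X Y`
is constantly `y n` on `Δ n` for infinitely many `n`; the fibres of one such `f` witness the
`B_ℕ`-property.

Conversely, let `U n` be open, dense and decreasing. A finite partial function `p` with domain `A`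
has an extension to a finite set `S` whose values on `S \ A` force into `U n` *every* `f` with
`f '' A ⊆ p '' A`, as there are only finitely many traces of such `f` on `A`. Iterating gives
`A 0 ⊂ A 1 ⊂ ⋯` and a limit function `h`. The `B_ℕ`-property, applied to the increments
`A (n + 1) \ A n`, yields a locally constant `r : X → X` which fixes `A 0` and infinitely many
increments and maps the corresponding `A n` to themselves. The function `h ∘ r` is continuous,
extends `h` on `A 0`, and lies in `U n` for infinitely many `n`, hence for all `n`.
-/

open Filter Function

section Sets

variable {ι X Y : Type*}

lemma finite_setOf_not_disjoint {F : Set X} (hF : F.Finite) {Δ : ι → Set X}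
    (hΔ : Pairwise (Disjoint on Δ)) : {i | ¬Disjoint F (Δ i)}.Finite := by
  have hpoint (x : X) : {i | x ∈ Δ i}.Subsingleton := fun i hi j hj =>
    hΔ.eq (not_disjoint_iff.2 ⟨x, hi, hj⟩)
  refine (hF.biUnion fun x _ => (hpoint x).finite).subset fun i hi => ?_
  obtain ⟨x, hxF, hxi⟩ := not_disjoint_iff.1 hi
  exact mem_biUnion hxF hxi

lemma pairwise_disjoint_succ_sdiff {A : ℕ → Set X} (hA : Monotone A) :
    Pairwise (Disjoint on fun n => A (n + 1) \ A n) := by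
  refine (pairwise_disjoint_on _).2 fun m n hmn => ?_
  exact disjoint_sdiff_right.mono_left (sdiff_subset.trans (hA hmn))

lemma exists_eqOn_of_eqOn_succ {A : ℕ → Set X} (hA : Monotone A) {p : ℕ → X → Y}
    (hp : ∀ n, EqOn (p (n + 1)) (p n) (A n)) : ∃ h : X → Y, ∀ n, EqOn h (p n) (A n) := by
  have hstable {m n : ℕ} (hmn : m ≤ n) : EqOn (p n) (p m) (A m) := by
    induction n, hmn using Nat.le_induction with
    | base => exact eqOn_refl _ _
    | succ n hmn ih => exact ((hp n).mono (hA hmn)).trans ih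
  refine ⟨fun x => p (sInf {n | x ∈ A n}) x, fun n x hx => ?_⟩
  exact (hstable (Nat.sInf_le hx) (Nat.sInf_mem (s := {n | x ∈ A n}) ⟨n, hx⟩)).symm

end Sets

section Topology

variable {ι X : Type*} [TopologicalSpace X]

lemma dense_dissipate {U : ℕ → Set X} (hUo : ∀ n, IsOpen (U n)) (hUd : ∀ n, Dense (U n)) (n : ℕ) :
    Dense (dissipate U n) := by
  simpa only [dissipate, sInter_image, mem_Iic] using ((finite_Iic n).image U).dense_sInter
    (forall_mem_image.2 fun i _ => hUo i) (forall_mem_image.2 fun i _ => hUd i)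

lemma locallyFinite_of_exists_nhds_subsingleton {W : ι → Set X}
    (hW : ∀ x, ∃ U ∈ 𝓝 x, {i | (W i ∩ U).Nonempty}.Subsingleton) : LocallyFinite W := fun x =>
  let ⟨U, hU, hsub⟩ := hW x
  ⟨U, hU, hsub.finite⟩

lemma pairwise_disjoint_of_exists_nhds_subsingleton {W : ι → Set X}
    (hW : ∀ x, ∃ U ∈ 𝓝 x, {i | (W i ∩ U).Nonempty}.Subsingleton) : Pairwise (Disjoint on W) := by
  refine fun i j hij => disjoint_left.2 fun x hi hj => ?_
  obtain ⟨U, hU, hsub⟩ := hW x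
  have hxU := mem_of_mem_nhds hU
  exact hij (hsub ⟨x, hi, hxU⟩ ⟨x, hj, hxU⟩)

theorem exists_locallyConstant_retraction [TotallySeparatedSpace X] (S : Set X) [Finite S]
    [Nonempty S] : ∃ r : LocallyConstant X S, ∀ x : S, r x = x := by
  have hsep (z : {z : S × S // z.1 ≠ z.2}) : ∃ c : LocallyConstant X ℕ, c z.1.1 ≠ c z.1.2 := by
    obtain ⟨W, hW, hmem, hnotMem⟩ :=
      exists_isClopen_of_totally_separated (Subtype.coe_injective.ne z.2)
    exact ⟨.charFn ℕ hW, by simp_all [LocallyConstant.charFn]⟩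
  choose c hc using hsep
  let φ : LocallyConstant X ({z : S × S // z.1 ≠ z.2} → ℕ) := .unflip c
  have hφ : Injective fun x : S => φ x := fun x y hxy => by
    by_contra hne
    exact hc ⟨(x, y), hne⟩ (congrFun hxy ⟨(x, y), hne⟩)
  exact ⟨φ.map (invFun fun x : S => φ x), leftInverse_invFun hφ⟩

theorem exists_locallyConstant_index {W : ι → Set X} (hclopen : ∀ i, IsClopen (W i))
    (hfin : LocallyFinite W) (hdisj : Pairwise (Disjoint on W)) :
    ∃ κ : LocallyConstant X (Option ι), ∀ x i, κ x = some i ↔ x ∈ W i := by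
  have hindex (x : X) : ∃ o : Option ι, ∀ i, o = some i ↔ x ∈ W i := by
    by_cases hx : ∃ i, x ∈ W i
    · obtain ⟨j, hj⟩ := hx
      exact ⟨some j, fun i => ⟨fun h => Option.some.inj h ▸ hj, fun hi =>
        congrArg some (hdisj.eq (not_disjoint_iff.2 ⟨x, hj, hi⟩))⟩⟩
    · exact ⟨none, by simpa using hx⟩
  choose κ hκ using hindex
  have hnone (x : X) : κ x = none ↔ x ∉ ⋃ i, W i := by
    simp [Option.eq_none_iff_forall_ne_some, hκ]
  refine ⟨⟨κ, IsLocallyConstant.iff_isOpen_fiber.2 ?_⟩, hκ⟩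
  rintro (_ | i)
  · convert (hfin.isClosed_iUnion fun i => (hclopen i).isClosed).isOpen_compl
    exact Set.ext hnone
  · convert (hclopen i).isOpen
    exact Set.ext fun x => hκ x i

theorem exists_locallyConstant_glue {Z : Type*} {W : ι → Set X} (hclopen : ∀ i, IsClopen (W i))
    (hfin : LocallyFinite W) (hdisj : Pairwise (Disjoint on W))
    (s : ι → LocallyConstant X Z) (s₀ : LocallyConstant X Z) :
    ∃ r : LocallyConstant X Z,
      (∀ i, EqOn r (s i) (W i)) ∧ EqOn r s₀ (⋃ i, W i)ᶜ := by
  obtain ⟨κ, hκ⟩ := exists_locallyConstant_index hclopen hfin hdisj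
  let piece (o : Option ι) : LocallyConstant X Z := o.elim s₀ s
  refine ⟨⟨fun x => piece (κ x) x, (IsLocallyConstant.iff_eventually_eq _).2 fun x => ?_⟩,
    fun i x hx => ?_, fun x hx => ?_⟩
  · filter_upwards [κ.isLocallyConstant.eventually_eq x,
      (piece (κ x)).isLocallyConstant.eventually_eq x] with y hκy hy
    exact (congrArg (fun o => piece o y) hκy).trans hy
  · simp [piece, (hκ x i).2 hx]
  · have hnone : κ x = none :=
      Option.eq_none_iff_forall_ne_some.2 fun i hi => hx (mem_iUnion_of_mem i ((hκ x i).1 hi))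
    simp [piece, hnone]

theorem exists_locallyConstant_eqOn_id_of_locallyFinite [TotallySeparatedSpace X]
    {A : ℕ → Finset X} (hA : Monotone A) (hA₀ : (A 0).Nonempty) {nk : ℕ → ℕ} (hnk : StrictMono nk)
    {W : ℕ → Set X} (hclopen : ∀ k, IsClopen (W k)) (hfin : LocallyFinite W)
    (hdisj : Pairwise (Disjoint on W)) (hsub : ∀ k, (A (nk k + 1) \ A (nk k) : Set X) ⊆ W k) :
    ∃ r : LocallyConstant X X, EqOn r id (A 0) ∧
      ∀ k, MapsTo r (A (nk k)) (A (nk k)) ∧ EqOn r id (A (nk k + 1) \ A (nk k)) := by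
  have hne (n : ℕ) : Nonempty (A n : Set X) :=
    (hA₀.mono (hA n.zero_le)).to_subtype
  choose ρ hρ using fun n => exists_locallyConstant_retraction (A n : Set X)
  have hρ_id {n : ℕ} {x : X} (hx : x ∈ A n) : (ρ n x : X) = x := congrArg _ (hρ n ⟨x, hx⟩)
  -- Cutting `W k` down to `C k` makes the glued map send `A (nk k)` into itself: the later pieces
  -- do not meet `A (nk k)`, and the earlier ones take values in it.
  let C (k : ℕ) : Set X := W k ∩ ρ (nk k + 1) ⁻¹' {y | (y : X) ∉ A (nk k)}
  have hC {k : ℕ} {x : X} (hx : x ∈ A (nk k + 1)) : x ∈ C k ↔ x ∈ W k ∧ x ∉ A (nk k) := by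
    simp [C, hρ_id hx]
  obtain ⟨r, hrC, hr₀⟩ := exists_locallyConstant_glue (W := C)
    (fun k => (hclopen k).inter ((isClopen_discrete _).preimage (ρ (nk k + 1)).continuous))
    (hfin.subset fun k => inter_subset_left)
    (hdisj.mono fun i j h => h.mono inter_subset_left inter_subset_left)
    (fun k => (ρ (nk k + 1)).map Subtype.val) ((ρ 0).map Subtype.val)
  have hr_cases (x : X) : r x ∈ A 0 ∨ ∃ j, x ∈ C j ∧ r x ∈ A (nk j + 1) := by
    by_cases hx : x ∈ ⋃ j, C j
    · obtain ⟨j, hj⟩ := mem_iUnion.1 hx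
      exact .inr ⟨j, hj, by simp [hrC j hj]⟩
    · exact .inl (by simp [hr₀ hx])
  have hnotMem {x : X} {k j : ℕ} (hx : x ∈ A (nk k)) (hkj : k ≤ j) : x ∉ C j := fun hj =>
    have hxj : x ∈ A (nk j) := hA (hnk.monotone hkj) hx
    ((hC (hA (nk j).le_succ hxj)).1 hj).2 hxj
  refine ⟨r, fun x hx => ?_, fun k => ⟨fun x hx => ?_, fun x hx => ?_⟩⟩
  · have hxC : x ∉ ⋃ j, C j := by
      simpa using fun j => hnotMem (hA (nk 0).zero_le hx) j.zero_le
    simpa [hr₀ hxC] using hρ_id hx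
  · obtain hr | ⟨j, hxj, hr⟩ := hr_cases x
    · exact hA (nk k).zero_le hr
    · have hjk : j < k := not_le.1 fun hkj => hnotMem hx hkj hxj
      exact hA (hnk hjk) hr
  · have hxC : x ∈ C k := (hC hx.1).2 ⟨hsub k hx, hx.2⟩
    simpa [hrC k hxC] using hρ_id hx.1

end Topology

theorem BNProperty.exists_locallyConstant_eqOn_id {X : Type*} [TopologicalSpace X]
    [TotallySeparatedSpace X] (hX : BNProperty X) {A : ℕ → Finset X} (hA : StrictMono A)
    (hA₀ : (A 0).Nonempty) :
    ∃ nk : ℕ → ℕ, StrictMono nk ∧ ∃ r : LocallyConstant X X, EqOn r id (A 0) ∧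
      ∀ k, MapsTo r (A (nk k)) (A (nk k)) ∧ EqOn r id (A (nk k + 1) \ A (nk k)) := by
  have hmono : Monotone fun n => (A n : Set X) := fun m n hmn => by exact_mod_cast hA.monotone hmn
  obtain ⟨nk, hnk, W, hclopen, hsub, hdiscrete⟩ := hX (fun n => A (n + 1) \ A n)
    (fun n => (A (n + 1)).finite_toSet.sdiff)
    (fun n => sdiff_nonempty.2 (by exact_mod_cast (hA n.lt_succ_self).not_ge))
    (fun m n hmn => (pairwise_disjoint_succ_sdiff hmono hmn).inter_eq)
  exact ⟨nk, hnk, exists_locallyConstant_eqOn_id_of_locallyFinite hA.monotone hA₀ hnk hclopen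
    (locallyFinite_of_exists_nhds_subsingleton hdiscrete)
    (pairwise_disjoint_of_exists_nhds_subsingleton hdiscrete) hsub⟩

namespace Cp

variable {X Y : Type*} [TopologicalSpace X] [TopologicalSpace Y]

/-- The set of continuous functions extending the restriction of `p` to `S`. With `Y` discrete, the
cylinders over finite sets are the standard base of `Cp X Y`; `p` is total for convenience, and only
its values on `S` matter. -/
def cylinder (S : Set X) (p : X → Y) : Set (Cp X Y) :=
  {f | EqOn f.1 p S}

section DiscreteTopology

variable [DiscreteTopology Y]

lemma isOpen_cylinder {S : Set X} (hS : S.Finite) (p : X → Y) : IsOpen (cylinder S p) := by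
  have hpi : cylinder S p = Subtype.val ⁻¹' S.pi fun x => {p x} := rfl
  rw [hpi]
  exact (isOpen_set_pi hS fun x _ => isOpen_discrete _).preimage continuous_subtype_val

lemma hasBasis_nhds (f : Cp X Y) : (𝓝 f).HasBasis Set.Finite fun S => cylinder S f.1 := by
  rw [nhds_subtype_eq_comap, nhds_pi]
  simp only [nhds_discrete, ← principal_singleton]
  exact (hasBasis_pi_principal fun x => {f.1 x}).comap Subtype.val

end DiscreteTopology

variable [TotallySeparatedSpace X]

theorem cylinder_nonempty {S : Set X} (hS : S.Finite) (p : X → Y) : (cylinder S p).Nonempty := by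
  cases isEmpty_or_nonempty X with
  | inl h => exact ⟨⟨p, continuous_of_discreteTopology⟩, eqOn_refl _ _⟩
  | inr h =>
    have : Finite ↑(insert h.some S) := hS.insert _
    obtain ⟨r, hr⟩ := exists_locallyConstant_retraction (insert h.some S)
    refine ⟨⟨_, (r.map fun y => p y.1).continuous⟩, fun x hx => ?_⟩
    exact congrArg (fun y => p y.1) (hr ⟨x, mem_insert_of_mem _ hx⟩)

variable [DiscreteTopology Y]

theorem eventually_residual_frequently_mem_cylinder {Δ : ℕ → Set X} (hfin : ∀ n, (Δ n).Finite)
    (hdisj : Pairwise (Disjoint on Δ)) (p : ℕ → X → Y) :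
    ∀ᶠ f in residual (Cp X Y), ∃ᶠ n in atTop, f ∈ cylinder (Δ n) (p n) := by
  classical
  simp only [frequently_atTop, eventually_countable_forall]
  refine fun N => residual_of_dense_open ?_ (dense_iff_inter_open.2 ?_)
  · simp only [ofPred_exists, ofPred_and]
    exact isOpen_iUnion fun n => isOpen_const.inter (isOpen_cylinder (hfin n) (p n))
  · rintro V hV ⟨f, hf⟩
    obtain ⟨F, hF, hFV⟩ := (hasBasis_nhds f).mem_iff.1 (hV.mem_nhds hf)
    obtain ⟨n, hn, hNn⟩ := ((finite_setOf_not_disjoint hF hdisj).eventually_cofinite_notMem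
      |>.filter_mono Nat.cofinite_eq_atTop.ge |>.and (eventually_ge_atTop N)).exists
    have hFn : Disjoint F (Δ n) := by simpa using hn
    obtain ⟨g, hg⟩ := cylinder_nonempty (hF.union (hfin n)) (F.piecewise f.1 (p n))
    refine ⟨g, hFV fun x hx => ?_, n, hNn, fun x hx => ?_⟩
    · rw [hg (.inl hx), piecewise_eq_of_mem _ _ _ hx]
    · rw [hg (.inr hx), piecewise_eq_of_notMem _ _ _ (hFn.notMem_of_mem_right hx)]

theorem bnProperty_of_not_isMeagre [Infinite Y] (hX : ¬IsMeagre (univ : Set (Cp X Y))) :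
    BNProperty X := by
  intro Δ hfin _ hdisj
  let y := Infinite.natEmbedding Y
  have : (residual (Cp X Y)).NeBot := neBot_iff.2 fun h => hX (by simp [IsMeagre, h])
  obtain ⟨f, hf⟩ := (eventually_residual_frequently_mem_cylinder hfin
    (fun m n hmn => disjoint_iff_inter_eq_empty.2 (hdisj m n hmn)) fun n _ => y n).exists
  obtain ⟨nk, hnk, hfnk⟩ := extraction_of_frequently_atTop hf
  refine ⟨nk, hnk, fun k => f.1 ⁻¹' {y (nk k)}, fun k => (isClopen_discrete _).preimage f.2,
    hfnk, fun x => ⟨f.1 ⁻¹' {f.1 x}, ((isOpen_discrete _).preimage f.2).mem_nhds rfl, ?_⟩⟩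
  rintro i ⟨a, hai, hax⟩ j ⟨b, hbj, hbx⟩
  exact hnk.injective (y.injective (hai.symm.trans (hax.trans (hbx.symm.trans hbj))))

lemma exists_cylinder_subset {U : Set (Cp X Y)} (hUo : IsOpen U) (hUd : Dense U) (S : Finset X)
    (p : X → Y) : ∃ T : Finset X, S ⊆ T ∧ ∃ q : X → Y, EqOn q p S ∧ cylinder T q ⊆ U := by
  classical
  obtain ⟨f, hfp, hfU⟩ := hUd.inter_open_nonempty _ (isOpen_cylinder S.finite_toSet p)
    (cylinder_nonempty S.finite_toSet p)
  obtain ⟨F, hF, hFU⟩ := (hasBasis_nhds f).mem_iff.1 (hUo.mem_nhds hfU)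
  refine ⟨S ∪ hF.toFinset, Finset.subset_union_left, f.1, hfp, fun g hg => hFU fun x hx => hg ?_⟩
  simp [hx]

lemma exists_forall_cylinder_inter_subset {U : Set (Cp X Y)} (hUo : IsOpen U) (hUd : Dense U)
    (A : Finset X) {P : Set (X → Y)} (hP : P.Finite) (q₀ : X → Y) :
    ∃ S : Finset X, A ⊆ S ∧ ∃ q : X → Y, ∀ p ∈ P, cylinder A p ∩ cylinder (S \ A) q ⊆ U := by
  classical
  induction P, hP using Set.Finite.induction_on with
  | empty => exact ⟨A, Subset.rfl, q₀, by simp⟩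
  | @insert p P _ _ ih =>
    obtain ⟨S, hAS, q, hq⟩ := ih
    obtain ⟨T, hST, q', hq', hT⟩ := exists_cylinder_subset hUo hUd S (A.piecewise p q)
    refine ⟨T, hAS.trans hST, q', forall_mem_insert.2 ⟨?_, fun p' hp' => ?_⟩⟩
    · rintro f ⟨hfA, hfT⟩
      refine hT fun x hx => ?_
      by_cases hxA : x ∈ A
      · rw [hfA hxA, hq' (hAS hxA), Finset.piecewise_eq_of_mem _ _ _ hxA]
      · exact hfT ⟨hx, hxA⟩
    · rintro f ⟨hfA, hfT⟩
      refine hq p' hp' ⟨hfA, fun x hx => ?_⟩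
      rw [hfT ⟨hST hx.1, hx.2⟩, hq' hx.1, Finset.piecewise_eq_of_notMem _ _ _ hx.2]

lemma exists_forcing_extension [Infinite X] {U : Set (Cp X Y)} (hUo : IsOpen U) (hUd : Dense U)
    (A : Finset X) (p : X → Y) :
    ∃ S : Finset X, A ⊂ S ∧ ∃ q : X → Y, EqOn q p A ∧
      {f | MapsTo f.1 A (p '' A)} ∩ cylinder (S \ A) q ⊆ U := by
  classical
  let trace (σ : A → A) : X → Y := extend Subtype.val (fun x => p (σ x)) p
  obtain ⟨S, hAS, q, hq⟩ :=
    exists_forall_cylinder_inter_subset hUo hUd A (finite_range trace) p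
  obtain ⟨a, ha⟩ := Infinite.exists_notMem_finset A
  refine ⟨insert a S, ?_, A.piecewise p q, fun x hx => A.piecewise_eq_of_mem _ _ hx, ?_⟩
  · exact (Finset.ssubset_iff_of_subset (hAS.trans (Finset.subset_insert a S))).2
      ⟨a, Finset.mem_insert_self a S, ha⟩
  · rintro f ⟨hfA, hfS⟩
    choose σ hσA hσ using hfA
    refine hq _ (mem_range_self fun x : A => ⟨σ x.2, hσA x.2⟩) ⟨fun x hx => ?_, fun x hx => ?_⟩
    · have htrace := Subtype.val_injective.extend_apply (fun y : A => p (σ y.2)) p ⟨x, hx⟩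
      exact (hσ hx).symm.trans htrace.symm
    · rw [hfS ⟨Finset.mem_insert_of_mem hx.1, hx.2⟩, Finset.piecewise_eq_of_notMem _ _ _ hx.2]

theorem exists_forcing_sequence [Infinite X] {U : ℕ → Set (Cp X Y)} (hUo : ∀ n, IsOpen (U n))
    (hUd : ∀ n, Dense (U n)) (A₀ : Finset X) (p₀ : X → Y) :
    ∃ (A : ℕ → Finset X) (h : X → Y), A 0 = A₀ ∧ EqOn h p₀ A₀ ∧ StrictMono A ∧
      ∀ n, {f | MapsTo f.1 (A n) (h '' A n)} ∩ cylinder (A (n + 1) \ A n) h ⊆ U n := by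
  choose S hAS q hq hforce using fun n => exists_forcing_extension (hUo n) (hUd n)
  let state (n : ℕ) : Finset X × (X → Y) :=
    n.rec (A₀, p₀) fun n s => (S n s.1 s.2, q n s.1 s.2)
  let A (n : ℕ) : Finset X := (state n).1
  let p (n : ℕ) : X → Y := (state n).2
  have hA : StrictMono A := strictMono_nat_of_lt_succ fun n => hAS n (A n) (p n)
  obtain ⟨h, hh⟩ := exists_eqOn_of_eqOn_succ (A := fun n => (A n : Set X)) (p := p)
    (fun m n hmn => by exact_mod_cast hA.monotone hmn) fun n => hq n (A n) (p n)
  refine ⟨A, h, rfl, hh 0, hA, fun n f hf => hforce n (A n) (p n) ⟨?_, ?_⟩⟩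
  · rw [← (hh n).image_eq]
    exact hf.1
  · exact hf.2.trans ((hh (n + 1)).mono sdiff_subset)

theorem baireSpace_of_bnProperty (hX : BNProperty X) : BaireSpace (Cp X Y) := by
  classical
  cases finite_or_infinite X with
  | inl _ => infer_instance
  | inr _ =>
    refine ⟨fun U hUo hUd => dense_iff_inter_open.2 ?_⟩
    rintro V hV ⟨v, hv⟩
    obtain ⟨F, hF, hFV⟩ := (hasBasis_nhds v).mem_iff.1 (hV.mem_nhds hv)
    have hopen (n : ℕ) : IsOpen (dissipate U n) :=
      (finite_Iic n).isOpen_biInter fun i _ => hUo i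
    obtain ⟨A, h, hA₀, hhv, hA, hforce⟩ := exists_forcing_sequence hopen (dense_dissipate hUo hUd)
      (insert (Classical.arbitrary X) hF.toFinset) v.1
    obtain ⟨nk, hnk, r, hr₀, hr⟩ :=
      hX.exists_locallyConstant_eqOn_id hA (hA₀ ▸ Finset.insert_nonempty _ _)
    rw [hA₀] at hr₀
    let f : Cp X Y := ⟨h ∘ r, (r.map h).continuous⟩
    have hfV : f ∈ V := hFV fun x hx => by
      have hx₀ : x ∈ insert (Classical.arbitrary X) hF.toFinset := by simp [hx]
      exact (congrArg h (hr₀ hx₀)).trans (hhv hx₀)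
    have hfU (k : ℕ) : f ∈ dissipate U (nk k) :=
      hforce (nk k) ⟨fun x hx => mem_image_of_mem h ((hr k).1 hx),
        fun x hx => congrArg h ((hr k).2 hx)⟩
    exact ⟨f, hfV, mem_iInter.2 fun i => dissipate_subset (hnk.id_le i) (hfU i)⟩

end Cp

theorem statement1_general (X Y : Type*) [TopologicalSpace X] [TotallySeparatedSpace X]
    [TopologicalSpace Y] [DiscreteTopology Y] [Infinite Y] :
    List.TFAE
      [¬ IsMeagre (Set.univ : Set (Cp X Y)),
       BaireSpace (Cp X Y),
       BNProperty X] := by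
  tfae_have 1 → 3 := Cp.bnProperty_of_not_isMeagre
  tfae_have 3 → 2 := Cp.baireSpace_of_bnProperty
  tfae_have 2 → 1 := fun _ =>
    have : Nonempty (Cp X Y) := ⟨⟨_, continuous_const (y := Classical.arbitrary Y)⟩⟩
    not_isMeagre_of_isOpen isOpen_univ univ_nonempty
  tfae_finish

/-- For a totally disconnected (totally separated) Tychonoff space `X`, the space
`C_p(X, ℕ)` is non-meager iff it is Baire iff `X` has the `B_ℕ`-property.
Here `ℕ` carries the discrete topology. -/
theorem statement1 (X : Type*) [TopologicalSpace X] [T1Space X] [CompletelyRegularSpace X]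
    [TotallySeparatedSpace X] :
    List.TFAE
      [¬ IsMeagre (Set.univ : Set (Cp X ℕ)),
       BaireSpace (Cp X ℕ),
       BNProperty X] :=
  statement1_general X ℕ
end

section
/- Let X be a totally disconnected Tychonoff space. Then the following are equivalent: (a) C_p(X, 𝔻) is a Baire space; (b) there exists a nonempty disconnected metrizable compact Hausdorff space K such that C_p(X, K) is a Baire space; (c) C_p(X, L) is a Baire space for every metrizable compact Hausdorff space L. -/
open Set Topology

/-!
The Baire property passes forward along continuous maps with dense range that are *skeletal* (the
closure of the image of a nonempty open set has nonempty interior). Skeletal maps are stable under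
products and under restriction to dense subspaces, so a skeletal `φ : A → B` with dense range
transfers the Baire property from `C_p(X, A)` to `C_p(X, B)`, the continuous functions being dense
in the product because `X` is totally separated. The indicator of a clopen set carries a
disconnected `K` onto `𝔻`. In the other direction a compact metrizable `L` is an irreducible image
of a closed subset of the Cantor space, which is in turn an open image of the Cantor space, and
both maps are skeletal.

It remains to pass from `C_p(X, 𝔻)` to `C_p(X, 𝔻^ℕ)`. For a dense set `A ⊆ D^Z` with `D` finite
and discrete, being Baire amounts to a combinatorial property: any `y : Z → D` is matched by some
`g ∈ A` on a given finite set and on infinitely many members of a given disjoint sequence of finite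
sets. This property survives countable products by a diagonal argument.
-/

open scoped Function

theorem baireSpace_coe_iff_of_dense {S : Type*} [TopologicalSpace S] {A : Set S} (hA : Dense A) :
    BaireSpace A ↔ ∀ U : ℕ → Set S, (∀ n, IsOpen (U n)) → (∀ n, Dense (U n)) →
      Dense (A ∩ ⋂ n, U n) := by
  have hval (V : Set S) : Dense (A ∩ V) ↔ Dense ((↑) ⁻¹' V : Set A) := by
    rw [← Subtype.image_preimage_coe, hA.isDenseInducing_val.dense_image]
  refine ⟨fun _ U hUo hUd => ?_, fun h => ⟨fun V hVo hVd => ?_⟩⟩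
  · rw [hval, preimage_iInter]
    exact dense_iInter_of_isOpen_nat (fun n => (hUo n).preimage continuous_subtype_val)
      fun n => (hval _).1 (hA.inter_of_isOpen_right (hUd n) (hUo n))
  · choose U hUo hUd hUV using fun n => exists_open_dense_of_open_dense_subtype hA (hVo n) (hVd n)
    simpa only [hval, preimage_iInter, hUV] using h U hUo hUd

section Skeletal

variable {S T : Type*} [TopologicalSpace S] [TopologicalSpace T]

/-- A skeletal map: nonempty open sets have somewhere dense images. Continuity is not part of the
definition. -/
def IsSkeletalMap (f : S → T) : Prop :=
  ∀ ⦃U : Set S⦄, IsOpen U → U.Nonempty → (interior (closure (f '' U))).Nonempty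

theorem IsSkeletalMap.dense_preimage {f : S → T} (hf : IsSkeletalMap f) {V : Set T}
    (hVo : IsOpen V) (hVd : Dense V) : Dense (f ⁻¹' V) := by
  refine dense_iff_inter_open.2 fun U hU hUne => ?_
  obtain ⟨t, htU, htV⟩ := hVd.inter_open_nonempty _ isOpen_interior (hf hU hUne)
  obtain ⟨_, hsV, s, hsU, rfl⟩ := mem_closure_iff.1 (interior_subset htU) V hVo htV
  exact ⟨s, hsU, hsV⟩

theorem IsSkeletalMap.baireSpace [BaireSpace S] {f : S → T} (hf : IsSkeletalMap f)
    (hfc : Continuous f) (hfd : DenseRange f) : BaireSpace T where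
  baire_property V hVo hVd := by
    have hdense : Dense (f ⁻¹' ⋂ n, V n) := by
      rw [preimage_iInter]
      exact dense_iInter_of_isOpen_nat (fun n => (hVo n).preimage hfc)
        fun n => hf.dense_preimage (hVo n) (hVd n)
    exact (hfd.dense_image hfc hdense).mono (image_preimage_subset _ _)

theorem isSkeletalMap_of_isOpenMap {f : S → T} (hf : IsOpenMap f) : IsSkeletalMap f :=
  fun _U hU hUne => (hUne.image f).mono (interior_maximal subset_closure (hf _ hU))

theorem isSkeletalMap_of_irreducible [CompactSpace S] [T2Space T] {f : S → T} (hf : Continuous f)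
    (hsurj : f.Surjective) (hirr : ∀ C : Set S, C ≠ univ → IsClosed C → f '' C ≠ univ) :
    IsSkeletalMap f := by
  intro U hU hUne
  have hproper : f '' Uᶜ ≠ univ :=
    hirr _ (compl_ne_univ.2 hUne) hU.isClosed_compl
  have hopen : IsOpen (f '' Uᶜ)ᶜ := (hf.isClosedMap _ hU.isClosed_compl).isOpen_compl
  have hsub : (f '' Uᶜ)ᶜ ⊆ f '' U := by
    simpa only [compl_compl] using subset_image_compl (s := Uᶜ) hsurj
  exact (nonempty_compl.2 hproper).mono (interior_maximal (hsub.trans subset_closure) hopen)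

theorem IsSkeletalMap.piMap {ι : Type*} {A B : ι → Type*} [∀ i, TopologicalSpace (A i)]
    [∀ i, TopologicalSpace (B i)] {f : ∀ i, A i → B i} (hf : ∀ i, IsSkeletalMap (f i))
    (hd : ∀ i, DenseRange (f i)) : IsSkeletalMap (Pi.map f) := by
  classical
  rintro U hU ⟨a, ha⟩
  obtain ⟨I, u, hu, huU⟩ := isOpen_pi_iff.1 hU a ha
  let W : Set (∀ i, B i) := (I : Set ι).pi fun i => interior (closure (f i '' u i))
  have hWo : IsOpen W := isOpen_set_pi I.finite_toSet fun i _ => isOpen_interior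
  have hWne : W.Nonempty := pi_nonempty_iff.2 fun i => by
    by_cases hi : i ∈ I
    · obtain ⟨b, hb⟩ := hf i (hu i hi).1 ⟨a i, (hu i hi).2⟩
      exact ⟨b, fun _ => hb⟩
    · exact ⟨f i (a i), fun h => absurd h hi⟩
  have hWU : W ⊆ closure (Pi.map f '' U) := by
    refine Subset.trans (fun b hb => ?_) (closure_mono (image_mono huU))
    rw [← univ_pi_ite, piMap_image_univ_pi, closure_pi_set]
    intro i _
    by_cases hi : i ∈ (I : Set ι)
    · simpa only [if_pos hi] using interior_subset (hb i hi)
    · simpa only [if_neg hi, image_univ] using hd i (b i)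
  exact hWne.mono (interior_maximal hWU hWo)

theorem IsSkeletalMap.mapsTo_restrict {f : S → T} (hf : IsSkeletalMap f) (hfc : Continuous f)
    {s : Set S} {t : Set T} (hs : Dense s) (hst : MapsTo f s t) :
    IsSkeletalMap (hst.restrict f s t) := by
  rintro _ ⟨U, hU, rfl⟩ ⟨a, ha⟩
  have hdense : closure (f '' U) ⊆ closure (f '' (U ∩ s)) :=
    closure_minimal ((image_mono (hs.open_subset_closure_inter hU)).trans
      (image_closure_subset_closure_image hfc)) isClosed_closure
  have himage : Subtype.val '' (hst.restrict f s t '' (Subtype.val ⁻¹' U)) = f '' (U ∩ s) := by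
    rw [← image_comp, hst.restrict_commutes, image_comp, Subtype.image_preimage_coe, inter_comm]
  obtain ⟨w, hw⟩ := hf hU ⟨a, ha⟩
  obtain ⟨_, hyW, x, ⟨-, hxs⟩, rfl⟩ :=
    mem_closure_iff.1 (hdense (interior_subset hw)) _ isOpen_interior hw
  refine ⟨⟨f x, hst hxs⟩, mem_interior.2 ⟨Subtype.val ⁻¹' interior (closure (f '' U)), ?_,
    isOpen_interior.preimage continuous_subtype_val, hyW⟩⟩
  intro z hz
  rw [closure_subtype, himage]
  exact hdense (interior_subset hz)

end Skeletal

section Postcomposition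

variable {X : Type*} [TopologicalSpace X] [TotallySeparatedSpace X]

theorem exists_continuous_bool_injOn (E : Finset X) :
    ∃ c : X → E × E → Bool, Continuous c ∧ InjOn c E := by
  have hsep (p : X × X) : ∃ f : X → Bool, Continuous f ∧ (p.1 ≠ p.2 → f p.1 ≠ f p.2) := by
    by_cases hp : p.1 = p.2
    · exact ⟨fun _ => true, continuous_const, fun h => absurd hp h⟩
    · obtain ⟨U, hU, h₁, h₂⟩ := exists_isClopen_of_totally_separated hp
      refine ⟨U.boolIndicator, (continuous_boolIndicator_iff_isClopen U).2 hU, fun _ => ?_⟩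
      rw [(mem_iff_boolIndicator U _).1 h₁, (notMem_iff_boolIndicator U _).1 h₂]
      exact Bool.true_eq_false_eq_False
  choose f hf hne using hsep
  refine ⟨fun x p => f (p.1, p.2) x, continuous_pi fun p => hf _, fun a ha b hb hab => ?_⟩
  by_contra h
  exact hne (a, b) h (congrFun hab (⟨a, ha⟩, ⟨b, hb⟩))

theorem exists_continuous_eqOn_finset {Y : Type*} [TopologicalSpace Y] (E : Finset X)
    (y : X → Y) : ∃ f : X → Y, Continuous f ∧ EqOn f y E := by
  rcases isEmpty_or_nonempty X with hX | hX
  · exact ⟨y, continuous_of_discreteTopology, eqOn_refl y E⟩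
  · obtain ⟨c, hc, hinj⟩ := exists_continuous_bool_injOn E
    refine ⟨fun x => y (Function.invFunOn c E (c x)), ?_, fun x hx => ?_⟩
    · exact (continuous_of_discreteTopology (f := fun b => y (Function.invFunOn c E b))).comp hc
    · exact congrArg y (hinj.leftInvOn_invFunOn hx)

theorem dense_setOf_continuous (Y : Type*) [TopologicalSpace Y] :
    Dense {f : X → Y | Continuous f} := by
  refine dense_iff_inter_open.2 ?_
  rintro O hO ⟨y, hy⟩
  obtain ⟨E, V, hV, hVO⟩ := isOpen_pi_iff.1 hO y hy
  obtain ⟨f, hf, hfy⟩ := exists_continuous_eqOn_finset E y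
  exact ⟨f, hVO fun x hx => hfy hx ▸ (hV x hx).2, hf⟩

theorem baireSpace_Cp_of_isSkeletalMap {A B : Type*} [TopologicalSpace A] [TopologicalSpace B]
    [BaireSpace (Cp X A)] {φ : A → B} (hφ : IsSkeletalMap φ) (hφc : Continuous φ)
    (hφd : DenseRange φ) : BaireSpace (Cp X B) := by
  let Φ : (X → A) → X → B := Pi.map fun _ => φ
  have hΦc : Continuous Φ := .piMap fun _ => hφc
  have hmaps : MapsTo Φ {f | Continuous f} {f | Continuous f} := fun _ hf => hφc.comp hf
  have hdense : DenseRange (hmaps.restrict Φ _ _) := by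
    rw [DenseRange, Subtype.dense_iff, ← range_comp, hmaps.restrict_commutes, range_comp,
      Subtype.range_coe]
    exact fun f _ => (DenseRange.piMap fun _ => hφd).dense_image hΦc (dense_setOf_continuous A) f
  have : BaireSpace {f : X → A | Continuous f} := ‹BaireSpace (Cp X A)›
  exact ((IsSkeletalMap.piMap (fun _ => hφ) fun _ => hφd).mapsTo_restrict hΦc
    (dense_setOf_continuous A) hmaps).baireSpace (hΦc.restrict hmaps) hdense

theorem baireSpace_Cp_bool_of_not_preconnectedSpace {K : Type*} [TopologicalSpace K]
    (hK : ¬ PreconnectedSpace K) [BaireSpace (Cp X K)] : BaireSpace (Cp X Bool) := by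
  rw [preconnectedSpace_iff_clopen] at hK
  push Not at hK
  obtain ⟨C, hC, hne, huniv⟩ := hK
  have hsurj : C.boolIndicator.Surjective := by
    rintro (_ | _)
    · obtain ⟨k, hk⟩ := (ne_univ_iff_exists_notMem C).1 huniv
      exact ⟨k, (notMem_iff_boolIndicator C k).1 hk⟩
    · obtain ⟨k, hk⟩ := hne
      exact ⟨k, (mem_iff_boolIndicator C k).1 hk⟩
  exact baireSpace_Cp_of_isSkeletalMap (isSkeletalMap_of_isOpenMap fun _ _ => isOpen_discrete _)
    ((continuous_boolIndicator_iff_isClopen C).2 hC) hsurj.denseRange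

end Postcomposition

section CantorSpace

variable {K : Type*} (e : K → ℕ → Bool)

open Classical in
/-- The points of `K` compatible with the first `n` steps of the greedy walk steered by `x`: at
step `n` the `n`-th coordinate is required to be `x n`, unless no remaining point allows it. -/
noncomputable def greedyBranch (x : ℕ → Bool) : ℕ → Set K
  | 0 => univ
  | n + 1 =>
    if (greedyBranch x n ∩ {z | e z n = x n}).Nonempty then greedyBranch x n ∩ {z | e z n = x n}
    else greedyBranch x n

theorem greedyBranch_nonempty [Nonempty K] (x : ℕ → Bool) (n : ℕ) :
    (greedyBranch e x n).Nonempty := by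
  induction n with
  | zero => exact univ_nonempty
  | succ n ih =>
    rw [greedyBranch]
    split_ifs with h
    exacts [h, ih]

theorem greedyBranch_antitone (x : ℕ → Bool) : Antitone (greedyBranch e x) :=
  antitone_nat_of_succ_le fun n => by
    rw [greedyBranch]
    split_ifs
    exacts [inter_subset_left, subset_rfl]

theorem greedyBranch_congr {x x' : ℕ → Bool} {n : ℕ} (h : x' ∈ PiNat.cylinder x n) :
    greedyBranch e x' n = greedyBranch e x n := by
  induction n with
  | zero => rfl
  | succ n ih =>
    rw [greedyBranch, greedyBranch, ih (PiNat.cylinder_anti x n.le_succ h), h n n.lt_succ_self]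

variable {e}

theorem isClopen_greedyBranch [TopologicalSpace K] (he : Continuous e) (x : ℕ → Bool) (n : ℕ) :
    IsClopen (greedyBranch e x n) := by
  induction n with
  | zero => exact isClopen_univ
  | succ n ih =>
    have hcoord : IsClopen {z | e z n = x n} :=
      (isClopen_discrete {x n}).preimage ((continuous_apply n).comp he)
    rw [greedyBranch]
    split_ifs
    exacts [ih.inter hcoord, ih]

theorem apply_eq_of_mem_greedyBranch_succ {x : ℕ → Bool} {n : ℕ} {z w : K}
    (hz : z ∈ greedyBranch e x (n + 1)) (hw : w ∈ greedyBranch e x (n + 1)) :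
    e z n = e w n := by
  rw [greedyBranch] at hz hw
  split_ifs at hz hw with h
  · exact hz.2.trans hw.2.symm
  · have hflip {v : K} (hv : v ∈ greedyBranch e x n) : e v n = !x n :=
      Bool.eq_not.2 fun hvx => h ⟨v, hv, hvx⟩
    exact (hflip hz).trans (hflip hw).symm

theorem mem_greedyBranch_of_forall_ge {x : ℕ → Bool} {n : ℕ} {z : K}
    (hz : z ∈ greedyBranch e x n) (hx : ∀ i ≥ n, x i = e z i) (m : ℕ) :
    z ∈ greedyBranch e x m := by
  rcases le_total m n with hmn | hnm
  · exact greedyBranch_antitone e x hmn hz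
  · induction m, hnm using Nat.le_induction with
    | base => exact hz
    | succ m hnm ih =>
      have hzm : z ∈ greedyBranch e x m ∩ {z | e z m = x m} := ⟨ih, (hx m hnm).symm⟩
      rw [greedyBranch, if_pos ⟨z, hzm⟩]
      exact hzm

theorem image_cylinder_eq_greedyBranch (he : e.Injective) {r : (ℕ → Bool) → K}
    (hr : ∀ x n, r x ∈ greedyBranch e x n) (x : ℕ → Bool) (n : ℕ) :
    r '' PiNat.cylinder x n = greedyBranch e x n := by
  refine Subset.antisymm ?_ fun z hz => ?_
  · rintro _ ⟨x', hx', rfl⟩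
    exact greedyBranch_congr e hx' ▸ hr x' n
  · -- follow `x` for `n` steps, then the coordinates of `z`
    let x' : ℕ → Bool := fun i => if i < n then x i else e z i
    have hx' : x' ∈ PiNat.cylinder x n := fun i hi => if_pos hi
    have hz' : ∀ m, z ∈ greedyBranch e x' m :=
      mem_greedyBranch_of_forall_ge (greedyBranch_congr e hx' ▸ hz) fun i hi => if_neg hi.not_gt
    exact ⟨x', hx', he (funext fun i =>
      apply_eq_of_mem_greedyBranch_succ (hr x' (i + 1)) (hz' (i + 1)))⟩

variable [TopologicalSpace K]

theorem exists_forall_mem_greedyBranch [CompactSpace K] [Nonempty K] (he : Continuous e)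
    (x : ℕ → Bool) : ∃ z, ∀ n, z ∈ greedyBranch e x n := by
  have hclosed (n : ℕ) : IsClosed (greedyBranch e x n) := (isClopen_greedyBranch he x n).isClosed
  obtain ⟨z, hz⟩ := IsCompact.nonempty_iInter_of_sequence_nonempty_isCompact_isClosed _
    (fun n => greedyBranch_antitone e x n.le_succ) (greedyBranch_nonempty e x)
    (hclosed 0).isCompact hclosed
  exact ⟨z, mem_iInter.1 hz⟩

theorem exists_continuous_isOpenMap_surjective_of_isEmbedding [CompactSpace K] [Nonempty K]
    (he : IsEmbedding e) :
    ∃ r : (ℕ → Bool) → K, Continuous r ∧ IsOpenMap r ∧ r.Surjective := by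
  choose r hr using exists_forall_mem_greedyBranch he.continuous
  have himage := image_cylinder_eq_greedyBranch he.injective hr
  refine ⟨r, he.continuous_iff.2 (continuous_pi fun n => ?_), ?_, fun z => ?_⟩
  · have hconst (x : ℕ → Bool) : ∀ x' ∈ PiNat.cylinder x (n + 1), e (r x') n = e (r x) n :=
      fun x' hx' => apply_eq_of_mem_greedyBranch_succ
        (himage x (n + 1) ▸ mem_image_of_mem r hx') (hr x (n + 1))
    exact ((IsLocallyConstant.iff_exists_open _).2 fun x => ⟨_, PiNat.isOpen_cylinder _ x (n + 1),
      PiNat.self_mem_cylinder x _, hconst x⟩).continuous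
  · refine (PiNat.isTopologicalBasis_cylinders _).isOpenMap_iff.2 ?_
    rintro _ ⟨x, n, rfl⟩
    exact himage x n ▸ (isClopen_greedyBranch he.continuous x n).isOpen
  · have hz : z ∈ greedyBranch e (fun _ => true) 0 := mem_univ z
    rw [← himage] at hz
    exact mem_range_of_mem_image _ _ hz

end CantorSpace

section Interpolation

variable {Z D : Type*}

/-- Every `y : Z → D` agrees with some member of `A` on a prescribed finite set and on infinitely
many members of a prescribed disjoint sequence of finite sets. For `D` finite and discrete and `A`
dense in `Z → D`, this is equivalent to `A` being a Baire space. -/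
def InterpolatesDisjointSeqs (A : Set (Z → D)) : Prop :=
  ∀ ⦃F : ℕ → Finset Z⦄, Pairwise (Disjoint on F) → ∀ (E : Finset Z) (y : Z → D),
    ∃ g ∈ A, EqOn g y E ∧ {n | EqOn g y (F n)}.Infinite

section CountableProduct

theorem InterpolatesDisjointSeqs.exists_infinite_of_infinite {A : Set (Z → D)}
    (hA : InterpolatesDisjointSeqs A) {F : ℕ → Finset Z} (hF : Pairwise (Disjoint on F))
    {N : Set ℕ} (hN : N.Infinite) (E : Finset Z) (y : Z → D) :
    ∃ g ∈ A, EqOn g y E ∧ {n ∈ N | EqOn g y (F n)}.Infinite := by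
  let ν : ℕ ↪ N := hN.natEmbedding
  have hν : Function.Injective fun k => (ν k : ℕ) := Subtype.val_injective.comp ν.injective
  obtain ⟨g, hgA, hgE, hg⟩ := hA (hF.comp_of_injective hν) E y
  refine ⟨g, hgA, hgE, (hg.image hν.injOn).mono ?_⟩
  rintro _ ⟨k, hk, rfl⟩
  exact ⟨(ν k).2, hk⟩

variable {X : Type*}

theorem InterpolatesDisjointSeqs.exists_infinite_slice {ι : Type*} {A : Set (X → D)}
    (hA : InterpolatesDisjointSeqs A) {F : ℕ → Finset (X × ι)} (hF : Pairwise (Disjoint on F))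
    {N : Set ℕ} (hN : N.Infinite) (E : Finset (X × ι)) (y : X × ι → D) (i : ι) :
    ∃ g ∈ A, (∀ x, (x, i) ∈ E → g x = y (x, i)) ∧
      {n ∈ N | ∀ x, (x, i) ∈ F n → g x = y (x, i)}.Infinite := by
  let slice (G : Finset (X × ι)) : Finset X :=
    G.preimage (·, i) (Prod.mk_left_injective i).injOn
  have hslice {G : Finset (X × ι)} {x : X} : x ∈ slice G ↔ (x, i) ∈ G := Finset.mem_preimage
  have hdisj : Pairwise (Disjoint on fun n => slice (F n)) := fun m n hmn =>
    Finset.disjoint_left.2 fun x hm hn =>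
      Finset.disjoint_left.1 (hF hmn) (hslice.1 hm) (hslice.1 hn)
  obtain ⟨g, hgA, hgE, hg⟩ := hA.exists_infinite_of_infinite hdisj hN (slice E) fun x => y (x, i)
  exact ⟨g, hgA, fun x hx => hgE (hslice.2 hx),
    hg.mono fun n hn => ⟨hn.1, fun x hx => hn.2 (hslice.2 hx)⟩⟩

/-- The coordinate `g i` is found at stage `i`; it agrees with `y` on the finite set reserved so far
and on infinitely many of the surviving `F n`, and then one more surviving `F n` is reserved. -/
theorem InterpolatesDisjointSeqs.setOf_forall_slice_mem {A : ℕ → Set (X → D)}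
    (hA : ∀ i, InterpolatesDisjointSeqs (A i)) :
    InterpolatesDisjointSeqs {h : X × ℕ → D | ∀ i, (fun x => h (x, i)) ∈ A i} := by
  classical
  intro F hF E y
  have step (i : ℕ) (s : Finset (X × ℕ) × {N : Set ℕ // N.Infinite}) :
      ∃ (g : X → D) (n : ℕ) (s' : Finset (X × ℕ) × {N : Set ℕ // N.Infinite}),
        g ∈ A i ∧ i < n ∧ s.1 ⊆ s'.1 ∧ F n ⊆ s'.1 ∧ s'.2.1 ⊆ s.2.1 ∧ n ∈ s'.2.1 ∧
        (∀ x, (x, i) ∈ s.1 → g x = y (x, i)) ∧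
        ∀ k ∈ s'.2.1, ∀ x, (x, i) ∈ F k → g x = y (x, i) := by
    obtain ⟨g, hgA, hgT, hgN⟩ := (hA i).exists_infinite_slice hF s.2.2 s.1 y i
    obtain ⟨n, hn, hin⟩ := hgN.exists_gt i
    exact ⟨g, n, ⟨s.1 ∪ F n, _, hgN⟩, hgA, hin, Finset.subset_union_left,
      Finset.subset_union_right, fun _ hk => hk.1, hn, hgT, fun _ hk => hk.2⟩
  choose g n next hgA hlt hT hFT hN hnN hgT hgN using step
  let s (i : ℕ) : Finset (X × ℕ) × {N : Set ℕ // N.Infinite} :=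
    Nat.rec (E, ⟨univ, infinite_univ⟩) next i
  have hTmono : Monotone fun i => (s i).1 := monotone_nat_of_le_succ fun i => hT i (s i)
  have hNanti : Antitone fun i => (s i).2.1 := antitone_nat_of_succ_le fun i => hN i (s i)
  refine ⟨fun p => g p.2 (s p.2) p.1, fun i => hgA i (s i), ?_, ?_⟩
  · rintro ⟨x, i⟩ hp
    exact hgT i (s i) x (hTmono (Nat.zero_le i) hp)
  · refine infinite_of_forall_exists_gt fun j => ⟨n j (s j), ?_, hlt j (s j)⟩
    rintro ⟨x, i⟩ hp
    rcases le_or_gt i j with hij | hji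
    · exact hgN i (s i) _ (hNanti (Nat.succ_le_succ hij) (hnN j (s j))) x hp
    · exact hgT i (s i) x (hTmono hji (hFT j (s j) hp))

end CountableProduct

theorem exists_gt_disjoint_of_pairwise_disjoint {F : ℕ → Finset Z}
    (hF : Pairwise (Disjoint on F)) (G : Finset Z) (m : ℕ) : ∃ n > m, Disjoint (F n) G := by
  by_contra! h
  simp only [Finset.not_disjoint_iff] at h
  choose x hxF hxG using h
  let point (n : Ioi m) : G := ⟨x n n.2, hxG n n.2⟩
  obtain ⟨a, b, hne, hab⟩ := Finite.exists_ne_map_eq_of_infinite point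
  have hxab : x a a.2 = x b b.2 := congrArg Subtype.val hab
  exact Finset.disjoint_left.1 (hF (Subtype.coe_ne_coe.2 hne)) (hxF a a.2) (hxab ▸ hxF b b.2)

theorem exists_eqOn_of_pairwise_disjoint {ι : Type*} {F : ι → Set Z}
    (hF : Pairwise (Disjoint on F)) (w : Z → D) (y : ι → Z → D) :
    ∃ Y : Z → D, (∀ z ∉ ⋃ n, F n, Y z = w z) ∧ ∀ n, EqOn Y (y n) (F n) := by
  classical
  refine ⟨fun z => if h : ∃ n, z ∈ F n then y h.choose z else w z, fun z hz => ?_, fun n z hz => ?_⟩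
  · exact dif_neg (mt mem_iUnion.2 hz)
  · have h : ∃ n, z ∈ F n := ⟨n, hz⟩
    have hn : h.choose = n := hF.eq (not_disjoint_iff.2 ⟨z, h.choose_spec, hz⟩)
    simp only [dif_pos h, hn]

theorem extend_coe_of_mem {E : Finset Z} (q : E → D) (h : Z → D) {z : Z} (hz : z ∈ E) :
    Function.extend Subtype.val q h z = q ⟨z, hz⟩ :=
  Subtype.val_injective.extend_apply q h ⟨z, hz⟩

theorem extend_coe_of_notMem {E : Finset Z} (q : E → D) (h : Z → D) {z : Z} (hz : z ∉ E) :
    Function.extend Subtype.val q h z = h z :=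
  Function.extend_apply' _ _ _ fun ⟨x, hx⟩ => hz (hx ▸ x.2)

variable [TopologicalSpace D]

theorem exists_finset_setOf_eqOn_subset {O : Set (Z → D)} (hO : IsOpen O) {f : Z → D}
    (hf : f ∈ O) : ∃ E : Finset Z, {g | EqOn g f E} ⊆ O := by
  obtain ⟨E, V, hV, hVO⟩ := isOpen_pi_iff.1 hO f hf
  exact ⟨E, fun g hg => hVO fun z hz => hg hz ▸ (hV z hz).2⟩

theorem InterpolatesDisjointSeqs.dense {A : Set (Z → D)} (hA : InterpolatesDisjointSeqs A) :
    Dense A := by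
  refine dense_iff_inter_open.2 ?_
  rintro O hO ⟨f, hf⟩
  obtain ⟨E, hE⟩ := exists_finset_setOf_eqOn_subset hO hf
  obtain ⟨g, hgA, hgE, -⟩ := hA (F := fun _ => ∅) (fun _ _ _ => disjoint_bot_left) E f
  exact ⟨g, hE hgE, hgA⟩

theorem continuous_extend_coe (E : Finset Z) (q : E → D) :
    Continuous fun h : Z → D => Function.extend Subtype.val q h := by
  refine continuous_pi fun z => ?_
  by_cases hz : z ∈ E
  · simpa only [extend_coe_of_mem _ _ hz] using continuous_const
  · simpa only [extend_coe_of_notMem _ _ hz] using continuous_apply z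

variable [DiscreteTopology D]

theorem isOpen_setOf_eqOn (E : Finset Z) (y : Z → D) : IsOpen {g : Z → D | EqOn g y E} :=
  isOpen_set_pi (s := fun z => {y z}) E.finite_toSet fun _ _ => isOpen_discrete _

theorem interpolatesDisjointSeqs_of_baireSpace {A : Set (Z → D)} (hA : Dense A) [BaireSpace A] :
    InterpolatesDisjointSeqs A := by
  classical
  intro F hF E y
  let U (m : ℕ) : Set (Z → D) := ⋃ n > m, {g | EqOn g y (F n)}
  have hUo (m : ℕ) : IsOpen (U m) := isOpen_biUnion fun n _ => isOpen_setOf_eqOn (F n) y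
  have hUd (m : ℕ) : Dense (U m) := by
    refine dense_iff_inter_open.2 ?_
    rintro O hO ⟨f, hf⟩
    obtain ⟨G, hG⟩ := exists_finset_setOf_eqOn_subset hO hf
    obtain ⟨n, hmn, hn⟩ := exists_gt_disjoint_of_pairwise_disjoint hF G m
    refine ⟨(F n).piecewise y f, hG fun z hz => ?_, mem_iUnion₂.2 ⟨n, hmn, fun z hz => ?_⟩⟩
    · exact Finset.piecewise_eq_of_notMem _ _ _ (Finset.disjoint_right.1 hn hz)
    · exact Finset.piecewise_eq_of_mem _ _ _ hz
  obtain ⟨g, hgE, hgA, hg⟩ := ((baireSpace_coe_iff_of_dense hA).1 ‹_› U hUo hUd).inter_open_nonempty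
    _ (isOpen_setOf_eqOn E y) ⟨y, eqOn_refl y E⟩
  refine ⟨g, hgA, hgE, infinite_of_forall_exists_gt fun m => ?_⟩
  obtain ⟨n, hmn, hn⟩ := mem_iUnion₂.1 (mem_iInter.1 hg m)
  exact ⟨n, hn, hmn⟩

theorem dense_preimage_extend_coe {U : Set (Z → D)} (hU : Dense U) (E : Finset Z) (q : E → D) :
    Dense ((fun h : Z → D => Function.extend Subtype.val q h) ⁻¹' U) := by
  classical
  refine dense_iff_inter_open.2 ?_
  rintro O hO ⟨h, hh⟩
  obtain ⟨G, hG⟩ := exists_finset_setOf_eqOn_subset hO hh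
  obtain ⟨u, hu, huU⟩ := hU.inter_open_nonempty _
    (isOpen_setOf_eqOn (G ∪ E) (Function.extend Subtype.val q h)) ⟨_, eqOn_refl _ _⟩
  let h' : Z → D := Function.extend Subtype.val (fun z : E => h z) u
  refine ⟨h', hG fun z hz => ?_, ?_⟩
  · by_cases hzE : z ∈ E
    · exact extend_coe_of_mem _ _ hzE
    · exact (extend_coe_of_notMem _ _ hzE).trans
        ((hu (Finset.mem_union_left E hz)).trans (extend_coe_of_notMem _ _ hzE))
  · have hu' : Function.extend Subtype.val q h' = u := by
      funext z
      by_cases hzE : z ∈ E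
      · rw [hu (Finset.mem_union_right G hzE), extend_coe_of_mem _ _ hzE,
          extend_coe_of_mem _ _ hzE]
      · exact (extend_coe_of_notMem _ _ hzE).trans (extend_coe_of_notMem _ _ hzE)
    exact mem_preimage.2 (hu' ▸ huU)

theorem exists_finset_disjoint_setOf_eqOn_subset [Finite D] [Nonempty (Z → D)] {U : Set (Z → D)}
    (hUo : IsOpen U) (hUd : Dense U) (E : Finset Z) :
    ∃ (F : Finset Z) (y : Z → D), Disjoint E F ∧ {h | EqOn h y F} ⊆ U := by
  classical
  let V : Set (Z → D) := ⋂ q : E → D, (fun h => Function.extend Subtype.val q h) ⁻¹' U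
  have hVo (q : E → D) : IsOpen ((fun h => Function.extend Subtype.val q h) ⁻¹' U) :=
    hUo.preimage (continuous_extend_coe E q)
  obtain ⟨y, hy⟩ : V.Nonempty :=
    (dense_iInter_of_isOpen hVo fun q => dense_preimage_extend_coe hUd E q).nonempty
  obtain ⟨G, hG⟩ := exists_finset_setOf_eqOn_subset (isOpen_iInter_of_finite hVo) hy
  refine ⟨G \ E, y, Finset.disjoint_sdiff, fun h hh => ?_⟩
  have hmem : E.piecewise y h ∈ V := hG fun z hz => by
    by_cases hzE : z ∈ E
    · exact E.piecewise_eq_of_mem y h hzE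
    · exact (E.piecewise_eq_of_notMem y h hzE).trans (hh (Finset.mem_sdiff.2 ⟨hz, hzE⟩))
  have hext : Function.extend Subtype.val (fun z : E => h z) (E.piecewise y h) = h := by
    funext z
    by_cases hzE : z ∈ E
    · exact extend_coe_of_mem _ _ hzE
    · exact (extend_coe_of_notMem _ _ hzE).trans (E.piecewise_eq_of_notMem y h hzE)
  exact hext ▸ mem_iInter.1 hmem fun z => h z

theorem exists_pairwise_disjoint_setOf_eqOn_subset [Finite D] [Nonempty (Z → D)]
    {U : ℕ → Set (Z → D)} (hUo : ∀ n, IsOpen (U n)) (hUd : ∀ n, Dense (U n)) (E : Finset Z) :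
    ∃ (F : ℕ → Finset Z) (y : ℕ → Z → D), Pairwise (Disjoint on F) ∧ (∀ n, Disjoint E (F n)) ∧
      ∀ n, {h | EqOn h (y n) (F n)} ⊆ U n := by
  classical
  choose F y hdisj hFU using fun n => exists_finset_disjoint_setOf_eqOn_subset (hUo n) (hUd n)
  let T (n : ℕ) : Finset Z := Nat.rec E (fun n T => T ∪ F n T) n
  have hTmono : Monotone T := monotone_nat_of_le_succ fun n => Finset.subset_union_left
  have hFT (n : ℕ) : F n (T n) ⊆ T (n + 1) := Finset.subset_union_right
  refine ⟨fun n => F n (T n), fun n => y n (T n), (pairwise_disjoint_on _).2 fun m n hmn => ?_,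
    fun n => (hdisj n (T n)).mono_left (hTmono n.zero_le), fun n => hFU n (T n)⟩
  exact (hdisj n (T n)).mono_left ((hFT m).trans (hTmono hmn))

theorem InterpolatesDisjointSeqs.baireSpace [Finite D] {A : Set (Z → D)}
    (hA : InterpolatesDisjointSeqs A) : BaireSpace A := by
  refine (baireSpace_coe_iff_of_dense hA.dense).2 fun U hUo hUd => dense_iff_inter_open.2 ?_
  rintro O hO ⟨f, hf⟩
  have : Nonempty (Z → D) := ⟨f⟩
  obtain ⟨E, hE⟩ := exists_finset_setOf_eqOn_subset hO hf
  have hVo (n : ℕ) : IsOpen (⋂ i ∈ Iic n, U i) := (finite_Iic n).isOpen_biInter fun i _ => hUo i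
  have hVd (n : ℕ) : Dense (⋂ i ∈ Iic n, U i) :=
    dense_biInter_of_isOpen (fun i _ => hUo i) (to_countable _) fun i _ => hUd i
  obtain ⟨F, y, hF, hEF, hFV⟩ := exists_pairwise_disjoint_setOf_eqOn_subset hVo hVd E
  obtain ⟨Y, hYf, hYy⟩ :=
    exists_eqOn_of_pairwise_disjoint (fun m n hmn => Finset.disjoint_coe.2 (hF hmn)) f y
  have hYE : EqOn Y f E := fun z hz => hYf z fun hzF => by
    obtain ⟨n, hn⟩ := mem_iUnion.1 hzF
    exact Finset.disjoint_left.1 (hEF n) hz hn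
  obtain ⟨g, hgA, hgE, hg⟩ := hA hF E Y
  refine ⟨g, hE (hgE.trans hYE), hgA, mem_iInter.2 fun i => ?_⟩
  obtain ⟨n, hn, hin⟩ := hg.exists_gt i
  exact mem_iInter₂.1 (hFV n (hn.trans (hYy n))) i hin.le

end Interpolation

section CompactMetrizable

variable {X : Type*} [TopologicalSpace X] [TotallySeparatedSpace X]

theorem baireSpace_Cp_nat_pi {D : Type*} [TopologicalSpace D] [DiscreteTopology D] [Finite D]
    [BaireSpace (Cp X D)] : BaireSpace (Cp X (ℕ → D)) := by
  have : BaireSpace {f : X → D | Continuous f} := ‹BaireSpace (Cp X D)›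
  have hA : InterpolatesDisjointSeqs {f : X → D | Continuous f} :=
    interpolatesDisjointSeqs_of_baireSpace (dense_setOf_continuous D)
  have : BaireSpace {h : X × ℕ → D // ∀ i, Continuous fun x => h (x, i)} :=
    (InterpolatesDisjointSeqs.setOf_forall_slice_mem fun _ => hA).baireSpace
  let e : {h : X × ℕ → D // ∀ i, Continuous fun x => h (x, i)} ≃ₜ Cp X (ℕ → D) :=
    Homeomorph.piCurry.subtype fun _ => continuous_pi_iff.symm
  exact e.baireSpace

theorem baireSpace_Cp_of_compact_metrizable [BaireSpace (Cp X Bool)] (L : Type)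
    [TopologicalSpace L] [CompactSpace L] [TopologicalSpace.MetrizableSpace L] :
    BaireSpace (Cp X L) := by
  rcases isEmpty_or_nonempty L with hL | hL
  · have : Finite (Cp X L) := inferInstance
    exact baire_of_finite
  let := TopologicalSpace.metrizableSpaceMetric L
  obtain ⟨f, hf, hfsurj⟩ := exists_nat_bool_continuous_surjective_of_compact L
  obtain ⟨E, hE, hEsurj, hirr⟩ := exists_compact_surjective_zorn_subset hf hfsurj
  have : Nonempty E := (image_nonempty.1 (hEsurj ▸ univ_nonempty)).to_subtype
  have hφ : Continuous (E.domRestrict f) := hf.comp continuous_subtype_val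
  have hφsurj : (E.domRestrict f).Surjective := by
    rw [← range_eq_univ, range_domRestrict, hEsurj]
  obtain ⟨r, hr, hropen, hrsurj⟩ :=
    exists_continuous_isOpenMap_surjective_of_isEmbedding (IsEmbedding.subtypeVal (p := (· ∈ E)))
  have : BaireSpace (Cp X (ℕ → Bool)) := baireSpace_Cp_nat_pi
  have : BaireSpace (Cp X E) :=
    baireSpace_Cp_of_isSkeletalMap (isSkeletalMap_of_isOpenMap hropen) hr hrsurj.denseRange
  exact baireSpace_Cp_of_isSkeletalMap (isSkeletalMap_of_irreducible hφ hφsurj hirr) hφ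
    hφsurj.denseRange

end CompactMetrizable

theorem statement6_general (X : Type*) [TopologicalSpace X] [TotallySeparatedSpace X] :
    List.TFAE
      [BaireSpace (Cp X Bool),
       ∃ (K : Type) (_ : TopologicalSpace K), Nonempty K ∧ ¬ ConnectedSpace K ∧
         CompactSpace K ∧ T2Space K ∧ TopologicalSpace.MetrizableSpace K ∧
         BaireSpace (Cp X K),
       ∀ (L : Type) (_ : TopologicalSpace L), CompactSpace L → T2Space L →
         TopologicalSpace.MetrizableSpace L → BaireSpace (Cp X L)] := by
  tfae_have 1 → 3 := fun _ L _ _ _ _ => baireSpace_Cp_of_compact_metrizable L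
  tfae_have 3 → 2 := fun h => by
    refine ⟨Bool, inferInstance, inferInstance, fun _ => ?_, inferInstance, inferInstance,
      inferInstance, h Bool _ inferInstance inferInstance inferInstance⟩
    exact not_subsingleton Bool PreconnectedSpace.trivial_of_discrete
  tfae_have 2 → 1 := by
    rintro ⟨K, _, _, hK, _, _, _, _⟩
    exact baireSpace_Cp_bool_of_not_preconnectedSpace (K := K) fun _ => hK ⟨‹_›⟩
  tfae_finish

/-- For a totally disconnected (totally separated) Tychonoff space `X`, the following are
equivalent: (a) `C_p(X, 𝔻)` is Baire; (b) `C_p(X, K)` is Baire for some nonempty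
disconnected metrizable compact Hausdorff space `K`; (c) `C_p(X, L)` is Baire for every
metrizable compact Hausdorff space `L`. Here `𝔻 = {0,1}` is realized as `Bool`. -/
theorem statement6 (X : Type*) [TopologicalSpace X] [T1Space X] [CompletelyRegularSpace X]
    [TotallySeparatedSpace X] :
    List.TFAE
      [BaireSpace (Cp X Bool),
       ∃ (K : Type) (_ : TopologicalSpace K), Nonempty K ∧ ¬ ConnectedSpace K ∧
         CompactSpace K ∧ T2Space K ∧ TopologicalSpace.MetrizableSpace K ∧
         BaireSpace (Cp X K),
       ∀ (L : Type) (_ : TopologicalSpace L), CompactSpace L → T2Space L →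
         TopologicalSpace.MetrizableSpace L → BaireSpace (Cp X L)] :=
  statement6_general X
end
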